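/- arXiv:1108.2184 — 4 statements merged into one kernel-verified Lean document; each statement's English description precedes it below -/
import Mathlib

section
/- The Mehler kernel solves the harmonic-oscillator heat equation: for every t > 0 and x, y ∈ ℝ^d, ∂_t K_t(x,y) = Δ_x K_t(x,y) − Ω̃² ‖x‖² K_t(x,y), where Δ_x is the Laplacian in the x variable. -/
/-! The kernel is a Gaussian, so every derivative is the kernel times its logarithmic derivative.
Write `a = coth (Ωt)`, `b = tanh (Ωt)`. The logarithmic gradient in `x` is
`g_μ = -(Ω/2) (a (x_μ - y_μ) + b (x_μ + y_μ))`, so that `ΔK / K = ∑ (g_μ² - (Ω/2)(a + b))`.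
In time, `a' = Ω (1 - a²)`, `b' = Ω (1 - b²)`, and the prefactor has logarithmic derivative
`-d Ω coth (2Ωt) = -(d/2) Ω (a + b)`. The prefactor cancels the constant part of `ΔK / K`, and the
quadratic parts agree coordinatewise up to `Ω² x_μ²` because `a b = 1`.
-/

open MeasureTheory Real Matrix

noncomputable section

/-- The hyperbolic cotangent. -/
def coth (t : ℝ) : ℝ := Real.cosh t / Real.sinh t

/-- The Mehler kernel of the harmonic oscillator
`K_t(x,y) = (Ω̃/(2π sinh 2Ω̃t))^{d/2}
  exp(−(Ω̃/4) coth(Ω̃t)‖x−y‖² − (Ω̃/4) tanh(Ω̃t)‖x+y‖²)`. -/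
def mehler (d : ℕ) (Ω : ℝ) (t : ℝ) (x y : Fin d → ℝ) : ℝ :=
  (Ω / (2 * π * Real.sinh (2 * Ω * t))) ^ ((d : ℝ) / 2) *
    Real.exp (-(Ω / 4) * coth (Ω * t) * (∑ i, (x i - y i) ^ 2)
      - (Ω / 4) * Real.tanh (Ω * t) * (∑ i, (x i + y i) ^ 2))

/-- The logarithmic derivative of `mehler d Ω t · y` in the direction of the `μ`-th coordinate. -/
def mehlerLogGrad (d : ℕ) (Ω t : ℝ) (x y : Fin d → ℝ) (μ : Fin d) : ℝ :=
  -(Ω / 2) * (coth (Ω * t) * (x μ - y μ) + Real.tanh (Ω * t) * (x μ + y μ))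

lemma hasFDerivAt_sum_sq_sub {d : ℕ} (x y : Fin d → ℝ) :
    HasFDerivAt (fun x : Fin d → ℝ => ∑ i, (x i - y i) ^ 2)
      (∑ i, (2 * (x i - y i)) • ContinuousLinearMap.proj (R := ℝ) (φ := fun _ : Fin d => ℝ) i)
      x := by
  refine HasFDerivAt.fun_sum fun i _ => ?_
  have h := ((hasFDerivAt_apply (𝕜 := ℝ) (F' := fun _ : Fin d => ℝ) i x).sub_const (y i)).pow 2
  simpa using h

lemma hasFDerivAt_sum_sq_add {d : ℕ} (x y : Fin d → ℝ) :
    HasFDerivAt (fun x : Fin d → ℝ => ∑ i, (x i + y i) ^ 2)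
      (∑ i, (2 * (x i + y i)) • ContinuousLinearMap.proj (R := ℝ) (φ := fun _ : Fin d => ℝ) i)
      x := by
  simpa using hasFDerivAt_sum_sq_sub x (-y)

lemma sum_smul_proj_single {d : ℕ} (c : Fin d → ℝ) (μ : Fin d) :
    (∑ i, c i • ContinuousLinearMap.proj (R := ℝ) (φ := fun _ : Fin d => ℝ) i)
      (Pi.single μ 1) = c μ := by
  simp [Pi.single_apply]

lemma differentiableAt_mehler (d : ℕ) (Ω t : ℝ) (x y : Fin d → ℝ) :
    DifferentiableAt ℝ (fun x' => mehler d Ω t x' y) x := by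
  unfold mehler
  fun_prop

lemma fderiv_mehler_single (d : ℕ) (Ω t : ℝ) (x y : Fin d → ℝ) (μ : Fin d) :
    fderiv ℝ (fun x' => mehler d Ω t x' y) x (Pi.single μ 1)
      = mehler d Ω t x y * mehlerLogGrad d Ω t x y μ := by
  have h := ((((hasFDerivAt_sum_sq_sub x y).const_mul (-(Ω / 4) * coth (Ω * t))).sub
    ((hasFDerivAt_sum_sq_add x y).const_mul ((Ω / 4) * Real.tanh (Ω * t)))).exp).const_mul
    ((Ω / (2 * π * Real.sinh (2 * Ω * t))) ^ ((d : ℝ) / 2))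
  have h' : fderiv ℝ (fun x' => mehler d Ω t x' y) x = _ := h.fderiv
  rw [h']
  simp only [_root_.smul_apply, _root_.sub_apply,
    sum_smul_proj_single, smul_eq_mul, mehler, mehlerLogGrad, Pi.sub_apply]
  ring

lemma hasFDerivAt_mehlerLogGrad (d : ℕ) (Ω t : ℝ) (x y : Fin d → ℝ) (μ : Fin d) :
    HasFDerivAt (fun x' => mehlerLogGrad d Ω t x' y μ)
      ((-(Ω / 2) * (coth (Ω * t) + Real.tanh (Ω * t))) •
        ContinuousLinearMap.proj (R := ℝ) (φ := fun _ : Fin d => ℝ) μ) x := by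
  have h0 := hasFDerivAt_apply (𝕜 := ℝ) (F' := fun _ : Fin d => ℝ) μ x
  have h := (((h0.sub_const (y μ)).const_mul (coth (Ω * t))).add
    ((h0.add_const (y μ)).const_mul (Real.tanh (Ω * t)))).const_mul (-(Ω / 2))
  refine h.congr_fderiv ?_
  rw [← add_smul, smul_smul]

lemma fderiv_fderiv_mehler_single (d : ℕ) (Ω t : ℝ) (x y : Fin d → ℝ) (μ : Fin d) :
    fderiv ℝ (fun x' => fderiv ℝ (fun x'' => mehler d Ω t x'' y) x' (Pi.single μ 1)) x
        (Pi.single μ 1)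
      = mehler d Ω t x y * (mehlerLogGrad d Ω t x y μ ^ 2
          - Ω / 2 * (coth (Ω * t) + Real.tanh (Ω * t))) := by
  simp only [fderiv_mehler_single]
  have h := (differentiableAt_mehler d Ω t x y).hasFDerivAt.mul
    (hasFDerivAt_mehlerLogGrad d Ω t x y μ)
  have h' : fderiv ℝ (fun x' => mehler d Ω t x' y * mehlerLogGrad d Ω t x' y μ) x = _ := h.fderiv
  rw [h']
  simp only [_root_.add_apply, _root_.smul_apply, smul_eq_mul,
    fderiv_mehler_single, ContinuousLinearMap.proj_apply, Pi.single_eq_same]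
  ring

lemma hasDerivAt_coth {u : ℝ} (hu : Real.sinh u ≠ 0) :
    HasDerivAt coth (1 - coth u ^ 2) u := by
  have h := (Real.hasDerivAt_cosh u).div (Real.hasDerivAt_sinh u) hu
  refine h.congr_deriv ?_
  unfold coth
  field_simp

lemma hasDerivAt_tanh_sq (u : ℝ) :
    HasDerivAt Real.tanh (1 - Real.tanh u ^ 2) u := by
  have hc := (Real.cosh_pos u).ne'
  have h := (Real.hasDerivAt_sinh u).div (Real.hasDerivAt_cosh u) hc
  have e : Real.tanh = Real.sinh / Real.cosh := by
    ext v; simp [Real.tanh_eq_sinh_div_cosh]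
  rw [e]
  refine h.congr_deriv ?_
  simp only [Pi.div_apply]
  field_simp

lemma coth_mul_tanh {u : ℝ} (hu : Real.sinh u ≠ 0) : coth u * Real.tanh u = 1 := by
  have hc := (Real.cosh_pos u).ne'
  rw [coth, Real.tanh_eq_sinh_div_cosh]
  field_simp

/-- The logarithmic derivative of the prefactor, by `2 coth (2u) = coth u + tanh u`. -/
lemma hasDerivAt_mehler_prefactor (p : ℝ) {Ω t : ℝ} (hΩ : 0 < Ω) (ht : 0 < t) :
    HasDerivAt (fun s => (Ω / (2 * π * Real.sinh (2 * Ω * s))) ^ p)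
      ((Ω / (2 * π * Real.sinh (2 * Ω * t))) ^ p
        * (-p * Ω * (coth (Ω * t) + Real.tanh (Ω * t)))) t := by
  have hs : 0 < Real.sinh (Ω * t) := Real.sinh_pos_iff.2 (by positivity)
  have hc := Real.cosh_pos (Ω * t)
  have hs2 : 0 < Real.sinh (2 * Ω * t) := Real.sinh_pos_iff.2 (by positivity)
  have hf : 0 < Ω / (2 * π * Real.sinh (2 * Ω * t)) := by positivity
  have h1 : HasDerivAt (fun s : ℝ => 2 * Ω * s) (2 * Ω) t := by
    simpa using (hasDerivAt_id t).const_mul (2 * Ω)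
  have h2 := (hasDerivAt_const t Ω).div (h1.sinh.const_mul (2 * π)) (by positivity)
  have h3 := h2.rpow_const (p := p) (Or.inl hf.ne')
  refine h3.congr_deriv ?_
  simp only [Pi.div_apply]
  rw [Real.rpow_sub_one hf.ne']
  have e : 2 * Ω * t = 2 * (Ω * t) := by ring
  rw [e] at hs2 ⊢
  generalize (Ω / (2 * π * Real.sinh (2 * (Ω * t)))) ^ p = A
  rw [coth, Real.tanh_eq_sinh_div_cosh, Real.sinh_two_mul, Real.cosh_two_mul]
  field_simp
  ring

/-- The Mehler kernel solves the harmonic-oscillator heat equation: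
`∂_t K_t(x,y) = Δ_x K_t(x,y) − Ω̃²‖x‖² K_t(x,y)` for `t > 0`. -/
theorem mehler_heat_equation (d : ℕ) (hd : 1 ≤ d) (Ω : ℝ) (hΩ : 0 < Ω)
    (t : ℝ) (ht : 0 < t) (x y : Fin d → ℝ) :
    deriv (fun s => mehler d Ω s x y) t
      = (∑ μ, fderiv ℝ (fun x' => fderiv ℝ (fun x'' => mehler d Ω t x'' y) x'
            (Pi.single μ 1)) x (Pi.single μ 1))
        - Ω ^ 2 * (∑ i, (x i) ^ 2) * mehler d Ω t x y := by
  have hs : Real.sinh (Ω * t) ≠ 0 := (Real.sinh_pos_iff.2 (by positivity)).ne'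
  have hlin : HasDerivAt (fun s : ℝ => Ω * s) Ω t := by
    simpa using (hasDerivAt_id t).const_mul Ω
  have ha : HasDerivAt (fun s => coth (Ω * s)) ((1 - coth (Ω * t) ^ 2) * Ω) t :=
    (hasDerivAt_coth hs).comp t hlin
  have hb : HasDerivAt (fun s => Real.tanh (Ω * s)) ((1 - Real.tanh (Ω * t) ^ 2) * Ω) t :=
    (hasDerivAt_tanh_sq (Ω * t)).comp t hlin
  have h := (hasDerivAt_mehler_prefactor ((d : ℝ) / 2) hΩ ht).mul
    (((ha.const_mul (-(Ω / 4))).mul_const (∑ i, (x i - y i) ^ 2)).sub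
      ((hb.const_mul (Ω / 4)).mul_const (∑ i, (x i + y i) ^ 2))).exp
  have h' : deriv (fun s => mehler d Ω s x y) t = _ := h.deriv
  have hab := coth_mul_tanh hs
  -- The identity of the quadratic parts, summed over coordinates.
  have key : ∑ μ, mehlerLogGrad d Ω t x y μ ^ 2
      = Ω ^ 2 * (∑ i, (x i) ^ 2)
        - Ω / 4 * ((1 - coth (Ω * t) ^ 2) * Ω) * (∑ i, (x i - y i) ^ 2)
        - Ω / 4 * ((1 - Real.tanh (Ω * t) ^ 2) * Ω) * (∑ i, (x i + y i) ^ 2) := by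
    simp only [Finset.mul_sum, ← Finset.sum_sub_distrib]
    refine Finset.sum_congr rfl fun i _ => ?_
    unfold mehlerLogGrad
    linear_combination Ω ^ 2 / 2 * (x i - y i) * (x i + y i) * hab
  rw [h']
  simp only [fderiv_fderiv_mehler_single, ← Finset.mul_sum, Finset.sum_sub_distrib, key,
    Finset.sum_const, Finset.card_univ, Fintype.card_fin, nsmul_eq_mul]
  simp only [mehler, Pi.sub_apply]
  ring

end
end

section
/- The Mehler kernel satisfies the semigroup (Chapman–Kolmogorov) property: for all s, t > 0 and all x, y ∈ ℝ^d, ∫_{ℝ^d} K_t(x,z) K_s(z,y) dz = K_{t+s}(x,y), the integral being absolutely convergent. -/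
/-! The kernel is a product over coordinates of one-dimensional kernels. With `a = 2Ωt` the
half-angle identities `coth (a/2) + tanh (a/2) = 2 coth a` and
`coth (a/2) - tanh (a/2) = 2 / sinh a` turn the one-dimensional kernel into
`√(Ω / (2π sinh a)) · exp (-(Ω/2) (coth a (x² + y²) - 2xy / sinh a))`. Completing the square in
`z`, the product of the kernels at times `t` and `s` is the kernel at time `t + s` multiplied by a
normalised Gaussian density in `z` (`mehlerOne_mul`); the addition formulas for `sinh` and `cosh`
are what make the leftover constant the right one. Each coordinate then integrates to the kernel
at time `t + s`, and Fubini for finite products gives the result in dimension `d`. -/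

open MeasureTheory Real Matrix

noncomputable section

/-- The one-dimensional Mehler kernel, written with the hyperbolic functions of `2Ωt`. -/
def mehlerOne (Ω t x y : ℝ) : ℝ :=
  √(Ω / (2 * π * Real.sinh (2 * Ω * t))) *
    Real.exp (-(Ω / 2) * (Real.cosh (2 * Ω * t) / Real.sinh (2 * Ω * t) * (x ^ 2 + y ^ 2)
      - 2 * x * y / Real.sinh (2 * Ω * t)))

/-- The exponent of the Mehler kernel, rewritten through the double-angle formulas. -/
lemma mehler_exponent {u : ℝ} (hu : 0 < u) (Ω x y : ℝ) :
    -(Ω / 4) * coth u * (x - y) ^ 2 - (Ω / 4) * Real.tanh u * (x + y) ^ 2 =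
      -(Ω / 2) * (Real.cosh (2 * u) / Real.sinh (2 * u) * (x ^ 2 + y ^ 2)
        - 2 * x * y / Real.sinh (2 * u)) := by
  have hS : Real.sinh u ≠ 0 := (Real.sinh_pos_iff.2 hu).ne'
  have hC : Real.cosh u ≠ 0 := (Real.cosh_pos u).ne'
  have h1 := Real.cosh_sq u
  rw [coth, Real.tanh_eq_sinh_div_cosh, Real.sinh_two_mul, Real.cosh_two_mul]
  field_simp
  linear_combination (8 * Ω * x * y) * h1

lemma mehler_eq_prod (d : ℕ) {Ω t : ℝ} (hΩ : 0 < Ω) (ht : 0 < t) (x y : Fin d → ℝ) :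
    mehler d Ω t x y = ∏ i, mehlerOne Ω t (x i) (y i) := by
  have hS : 0 < Real.sinh (2 * Ω * t) := Real.sinh_pos_iff.2 (by positivity)
  simp only [mehler, mehlerOne, Finset.prod_mul_distrib, Finset.prod_const, Finset.card_univ,
    Fintype.card_fin, ← Real.exp_sum]
  congr 1
  · rw [Real.sqrt_eq_rpow, ← Real.rpow_natCast, ← Real.rpow_mul (by positivity)]
    congr 1
    ring
  · rw [Finset.mul_sum, Finset.mul_sum, ← Finset.sum_sub_distrib]
    congr 1
    refine Finset.sum_congr rfl fun i _ => ?_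
    rw [mehler_exponent (mul_pos hΩ ht), mul_assoc 2 Ω t]

/-- Completing the square in the intermediate point `z`: the product of two kernels is the kernel
at the total time multiplied by a Gaussian density of total mass one. -/
lemma mehlerOne_mul {Ω s t : ℝ} (hΩ : 0 < Ω) (hs : 0 < s) (ht : 0 < t) (x y : ℝ) :
    ∃ B m : ℝ, 0 < B ∧ ∀ z, mehlerOne Ω t x z * mehlerOne Ω s z y =
      mehlerOne Ω (t + s) x y * (√(B / π) * Real.exp (-B * (z - m) ^ 2)) := by
  have hadd : 2 * Ω * (t + s) = 2 * Ω * t + 2 * Ω * s := by ring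
  have hSt : 0 < Real.sinh (2 * Ω * t) := Real.sinh_pos_iff.2 (by positivity)
  have hSs : 0 < Real.sinh (2 * Ω * s) := Real.sinh_pos_iff.2 (by positivity)
  have hSu : 0 < Real.sinh (2 * Ω * (t + s)) := Real.sinh_pos_iff.2 (by positivity)
  have hsinh := Real.sinh_add (2 * Ω * t) (2 * Ω * s)
  have hcosh := Real.cosh_add (2 * Ω * t) (2 * Ω * s)
  have h1 := Real.cosh_sq (2 * Ω * t)
  have h2 := Real.cosh_sq (2 * Ω * s)
  rw [← hadd] at hsinh hcosh
  unfold mehlerOne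
  generalize Real.sinh (2 * Ω * t) = a at *
  generalize Real.sinh (2 * Ω * s) = b at *
  generalize Real.sinh (2 * Ω * (t + s)) = c at *
  generalize Real.cosh (2 * Ω * t) = p at *
  generalize Real.cosh (2 * Ω * s) = q at *
  generalize Real.cosh (2 * Ω * (t + s)) = r at *
  -- `B` is minus the coefficient of `z ^ 2` in the total exponent, since
  -- `coth (2Ωt) + coth (2Ωs) = c / (a * b)`; `m` is the point where that exponent is maximal.
  refine ⟨Ω * c / (2 * a * b), (x * b + y * a) / c, by positivity, fun z => ?_⟩
  rw [mul_mul_mul_comm, mul_mul_mul_comm √(Ω / (2 * π * c)), ← Real.exp_add, ← Real.exp_add,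
    ← Real.sqrt_mul (by positivity), ← Real.sqrt_mul (by positivity)]
  congr 2
  · field_simp
  · -- The hyperbolic subtraction formulas express `p` and `q` through `a`, `b`, `c`, `r`; the two
    -- exponents then agree as polynomials modulo the relation `hc`.
    have hx : p * c = r * a + b := by
      rw [hsinh, hcosh]; linear_combination b * h1
    have hy : q * c = r * b + a := by
      rw [hsinh, hcosh]; linear_combination a * h2
    have hp : p = (r * a + b) / c := by field_simp; linarith
    have hq : q = (r * b + a) / c := by field_simp; linarith
    have hc : c ^ 2 = a ^ 2 + b ^ 2 + 2 * a * b * r := by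
      rw [hp, hq] at hsinh
      field_simp at hsinh
      linarith
    rw [hp, hq]
    field_simp
    linear_combination z ^ 2 * hc

lemma integrable_mehlerOne_mul {Ω s t : ℝ} (hΩ : 0 < Ω) (hs : 0 < s) (ht : 0 < t) (x y : ℝ) :
    Integrable (fun z => mehlerOne Ω t x z * mehlerOne Ω s z y) := by
  obtain ⟨B, m, hB, h⟩ := mehlerOne_mul hΩ hs ht x y
  simp only [h]
  exact (((integrable_exp_neg_mul_sq hB).comp_sub_right m).const_mul _).const_mul _

lemma integral_mehlerOne_mul {Ω s t : ℝ} (hΩ : 0 < Ω) (hs : 0 < s) (ht : 0 < t) (x y : ℝ) :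
    ∫ z, mehlerOne Ω t x z * mehlerOne Ω s z y = mehlerOne Ω (t + s) x y := by
  obtain ⟨B, m, hB, h⟩ := mehlerOne_mul hΩ hs ht x y
  have hπ := Real.pi_pos
  simp only [h]
  rw [integral_const_mul, integral_const_mul,
    integral_sub_right_eq_self (fun z => Real.exp (-B * z ^ 2)), integral_gaussian,
    ← Real.sqrt_mul (by positivity), div_mul_div_cancel₀ hπ.ne', div_self hB.ne',
    Real.sqrt_one, mul_one]

/-- The Mehler kernel satisfies the Chapman–Kolmogorov (semigroup)
property: `∫ K_t(x,z) K_s(z,y) dz = K_{t+s}(x,y)`, the integral being absolutely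
convergent. -/
theorem mehler_semigroup (d : ℕ) (hd : 1 ≤ d) (Ω : ℝ) (hΩ : 0 < Ω)
    (s t : ℝ) (hs : 0 < s) (ht : 0 < t) (x y : Fin d → ℝ) :
    Integrable (fun z : Fin d → ℝ => mehler d Ω t x z * mehler d Ω s z y) ∧
    (∫ z : Fin d → ℝ, mehler d Ω t x z * mehler d Ω s z y)
      = mehler d Ω (t + s) x y := by
  simp only [mehler_eq_prod d hΩ ht, mehler_eq_prod d hΩ hs, mehler_eq_prod d hΩ (add_pos ht hs),
    ← Finset.prod_mul_distrib]
  refine ⟨Integrable.fintype_prod fun i => integrable_mehlerOne_mul hΩ hs ht (x i) (y i), ?_⟩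
  rw [integral_fintype_prod_volume_eq_prod
    (fun i z => mehlerOne Ω t (x i) z * mehlerOne Ω s z (y i))]
  simp only [integral_mehlerOne_mul hΩ hs ht]

end
end

section
/- The diagonal integral of the Mehler kernel (the trace of the harmonic-oscillator heat semigroup) equals ∫_{ℝ^d} K_t(x,x) dx = (2 sinh(Ω̃ t))^{-d} for every t > 0. -/
/-!
On the diagonal the `coth` term vanishes and the kernel becomes a multiple of the centred Gaussian
`exp (-Ω tanh(Ωt) ∑ᵢ xᵢ²)`. This factors over the coordinates, so by Fubini and the one-dimensional
Gaussian integral the trace is the `d`-th power of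
`√(Ω / (2π sinh 2Ωt)) * √(π / (Ω tanh Ωt))`. The double-angle formula
`sinh 2Ωt = 2 sinh Ωt cosh Ωt` identifies this number with `(2 sinh Ωt)⁻¹`.
-/

open MeasureTheory Real Matrix

noncomputable section

/-- The restriction of the Mehler kernel to the diagonal is a product of one-dimensional
Gaussians. -/
lemma mehler_diag (d : ℕ) (Ω t : ℝ) (x : Fin d → ℝ) :
    mehler d Ω t x x = (Ω / (2 * π * Real.sinh (2 * Ω * t))) ^ ((d : ℝ) / 2) *
      ∏ i, Real.exp (-(Ω * Real.tanh (Ω * t)) * x i ^ 2) := by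
  unfold mehler
  rw [← Real.exp_sum, ← Finset.mul_sum]
  have h : ∑ i, (x i + x i) ^ 2 = 4 * ∑ i, x i ^ 2 := by
    rw [Finset.mul_sum]
    exact Finset.sum_congr rfl fun i _ => by ring
  simp only [sub_self, h]
  congr 2
  simp
  ring

/-- The trace in dimension one. -/
lemma sqrt_mul_sqrt_eq_inv_two_sinh {Ω t : ℝ} (hΩ : 0 < Ω) (ht : 0 < t) :
    √(Ω / (2 * π * Real.sinh (2 * Ω * t))) * √(π / (Ω * Real.tanh (Ω * t))) =
      (2 * Real.sinh (Ω * t))⁻¹ := by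
  have hs : 0 < Real.sinh (Ω * t) := Real.sinh_pos_iff.2 (mul_pos hΩ ht)
  have hc : 0 < Real.cosh (Ω * t) := Real.cosh_pos _
  rw [mul_assoc 2 Ω t, Real.sinh_two_mul, Real.tanh_eq_sinh_div_cosh,
    ← Real.sqrt_mul (by positivity), Real.sqrt_eq_iff_mul_self_eq (by positivity) (by positivity)]
  field_simp

/-- The diagonal integral of the Mehler kernel (the trace of the
harmonic-oscillator heat semigroup): `∫ K_t(x,x) dx = (2 sinh Ω̃t)^{−d}`. -/
theorem mehler_trace (d : ℕ) (hd : 1 ≤ d) (Ω : ℝ) (hΩ : 0 < Ω)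
    (t : ℝ) (ht : 0 < t) :
    (∫ x : Fin d → ℝ, mehler d Ω t x x) = ((2 * Real.sinh (Ω * t)) ^ d)⁻¹ := by
  have hA : 0 ≤ Ω / (2 * π * Real.sinh (2 * Ω * t)) := by
    have : 0 < Real.sinh (2 * Ω * t) := Real.sinh_pos_iff.2 (by positivity)
    positivity
  simp only [mehler_diag]
  rw [integral_const_mul,
    integral_fintype_prod_volume_eq_pow (fun y : ℝ => Real.exp (-(Ω * Real.tanh (Ω * t)) * y ^ 2)),
    integral_gaussian, Fintype.card_fin, Real.rpow_div_two_eq_sqrt _ hA, Real.rpow_natCast,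
    ← mul_pow, sqrt_mul_sqrt_eq_inv_two_sinh hΩ ht, inv_pow]

end
end

section
/- Trace of left Moyal multiplication composed with the Mehler heat kernel: for every Schwartz function f ∈ 𝓢(ℝ^d) and every t > 0, ∫_{ℝ^d} ( f ⋆ K_t(·, x) )(x) dx = (Ω̃/(2π sinh(2Ω̃t)))^{d/2} √(det G) ∫_{ℝ^d} f(z) exp( −Ω̃ tanh(Ω̃t) ⟨z, G z⟩ ) dz, where for fixed x the function y ↦ K_t(y,x) is Schwartz, so the Moyal product f ⋆ K_t(·,x) is defined, and the outer integral converges absolutely. -/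
/-!
Put `b = (Ω/4) tanh(Ωt)`, `s = (Ω/4)(coth(Ωt) + tanh(Ωt))` and `c = Ω/2`, so that
`b s = b² + c²/4`. The Mehler kernel is Gaussian, hence the inner Fourier integral in
`f ⋆ K_t(·,x)` can be evaluated (`moyal_mehler_eq`): up to constants the Moyal product at `x` is
`∫ f(x + ½Θk) E(x,k) dk`, where
`E(x,k) = exp(−|k|²/(4s) − (c²/s)|x|² − (2ib/s)⟨k,x⟩)` (`phaseKernel`).
Since `f` is bounded, the integrand is dominated by a Gaussian in `(x,k)`; this gives absolute
convergence and lets Fubini's theorem exchange `x` and `k`. Translating `x = z − ½Θk` and exchanging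
back (now `f` itself provides the decay in `z`) leaves `∫ f(z) (∫ E(z − ½Θk, k) dk) dz`.

The remaining Gaussian integral in `k` (`integral_phaseKernel`) has a non-scalar quadratic form,
but skewness of `Θ` gives the factorization `G⁻¹ = 1 − c²Θ² = MᵀM` with `M = 1 + cΘ`. So the
quadratic part is `|Mk|²/(4s)`, and the substitution `u = Mk` reduces it to a scalar Gaussian, with
Jacobian `|det M|⁻¹ = √(det G)`. Writing `z = Mᵀp`, one has `⟨z,Gz⟩ = |p|² = ⟨z,p⟩`, and the
exponent collapses to `−4b|p|² = −Ω tanh(Ωt)⟨z,Gz⟩`. The powers of `π`, `s` and `2` cancel.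
-/

open MeasureTheory Real Matrix

noncomputable section

/-- Euclidean dot product on `Fin d → ℝ`. -/
def dotR {d : ℕ} (x y : Fin d → ℝ) : ℝ := ∑ i, x i * y i

/-- The Moyal product of two complex-valued functions on `ℝ^d`, defined by the
iterated integral `(f ⋆ g)(x) = (2π)^{-d} ∫ k ∫ y f(x + ½Θk) g(x+y) e^{i⟨k,y⟩}`. -/
def moyal {d : ℕ} (Θ : Matrix (Fin d) (Fin d) ℝ) (f g : (Fin d → ℝ) → ℂ)
    (x : Fin d → ℝ) : ℂ :=
  ((2 * π) ^ d : ℝ)⁻¹ •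
    ∫ k : Fin d → ℝ, ∫ y : Fin d → ℝ,
      f (x + (2 : ℝ)⁻¹ • Θ.mulVec k) * g (x + y) *
        Complex.exp (Complex.I * (dotR k y : ℂ))

/-- The effective metric `G := (1 − ¼Ω̃²Θ²)⁻¹`. -/
def Gmat {d : ℕ} (Θ : Matrix (Fin d) (Fin d) ℝ) (Ω : ℝ) : Matrix (Fin d) (Fin d) ℝ :=
  ((1 : Matrix (Fin d) (Fin d) ℝ) - (Ω ^ 2 / 4) • (Θ * Θ))⁻¹

/-! ### Gaussian integrals -/

/-- The Gaussian integral in even dimension `d = 2m` with complex linear term `w + iu`, where the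
exponent is split into its real and imaginary parts. Evenness of `d` makes the prefactor an integer
power. -/
theorem gaussian_dot {d m : ℕ} (hd : d = m + m) {s : ℝ} (hs : 0 < s) (w u : Fin d → ℝ) :
    ∫ y : Fin d → ℝ, Complex.exp (((-s * (y ⬝ᵥ y) + w ⬝ᵥ y : ℝ) : ℂ) +
        Complex.I * ((u ⬝ᵥ y : ℝ) : ℂ)) =
      (((π / s) ^ m : ℝ) : ℂ) * Complex.exp ((((w ⬝ᵥ w - u ⬝ᵥ u) / (4 * s) : ℝ) : ℂ) +
        Complex.I * ((u ⬝ᵥ w / (2 * s) : ℝ) : ℂ)) := by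
  have hsC : (s : ℂ) ≠ 0 := by exact_mod_cast hs.ne'
  have h := GaussianFourier.integral_cexp_neg_mul_sum_add (b := (s : ℂ)) (by simpa using hs)
    (fun i : Fin d => (w i : ℂ) + Complex.I * (u i : ℂ))
  have hcard : ((Fintype.card (Fin d) : ℂ) / 2) = ((m : ℕ) : ℂ) := by
    rw [Fintype.card_fin, hd]; push_cast; ring
  rw [hcard, Complex.cpow_natCast] at h
  push_cast
  convert h using 2
  · ext y
    congr 1
    simp only [dotProduct]
    push_cast
    simp only [Finset.mul_sum, ← Finset.sum_add_distrib]
    exact Finset.sum_congr rfl fun i _ => by ring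
  · congr 1
    have : ∑ i, ((w i : ℂ) + Complex.I * (u i : ℂ)) ^ 2 =
        ((w ⬝ᵥ w : ℝ) : ℂ) - ((u ⬝ᵥ u : ℝ) : ℂ) + 2 * Complex.I * ((u ⬝ᵥ w : ℝ) : ℂ) := by
      simp only [dotProduct]
      push_cast
      simp only [Finset.mul_sum, ← Finset.sum_add_distrib, ← Finset.sum_sub_distrib]
      refine Finset.sum_congr rfl fun i _ => ?_
      linear_combination (u i : ℂ) ^ 2 * Complex.I_sq
    rw [this]
    field_simp
    ring

theorem integrable_gaussian_dot {d : ℕ} {s : ℝ} (hs : 0 < s) :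
    Integrable (fun y : Fin d → ℝ => Real.exp (-s * (y ⬝ᵥ y))) := by
  have h := (GaussianFourier.integrable_cexp_neg_mul_sum_add (b := (s : ℂ)) (by simpa using hs)
    (fun _ : Fin d => 0)).norm
  convert h using 2 with y
  rw [Complex.norm_exp]
  congr 1
  have : -(s : ℂ) * ∑ i, (y i : ℂ) ^ 2 + ∑ i, 0 * (y i : ℂ) = ((-s * (y ⬝ᵥ y) : ℝ) : ℂ) := by
    simp [dotProduct, sq]
  rw [this, Complex.ofReal_re]

theorem integral_comp_mulVec {d : ℕ} (M : Matrix (Fin d) (Fin d) ℝ) (hM : M.det ≠ 0)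
    (g : (Fin d → ℝ) → ℂ) (hg : Continuous g) :
    ∫ k, g (M *ᵥ k) = ((|M.det|⁻¹ : ℝ) : ℂ) * ∫ u, g u := by
  have h := Real.map_matrix_volume_pi_eq_smul_volume_pi hM
  have hc : Continuous (toLin' M) := LinearMap.continuous_of_finiteDimensional _
  have h2 := integral_map (μ := volume) hc.aemeasurable
    (f := g) hg.aestronglyMeasurable
  rw [h, integral_smul_measure, ENNReal.toReal_ofReal (abs_nonneg _), abs_inv] at h2
  simp only [toLin'_apply] at h2
  rw [← h2, Complex.real_smul]

/-! ### Linear algebra of the skew matrix -/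

theorem skew_dot {d : ℕ} {Θ : Matrix (Fin d) (Fin d) ℝ} (hskew : Θᵀ = -Θ) (x y : Fin d → ℝ) :
    x ⬝ᵥ (Θ *ᵥ y) = -(y ⬝ᵥ (Θ *ᵥ x)) := by
  rw [dotProduct_mulVec, ← mulVec_transpose, hskew, neg_mulVec, neg_dotProduct, dotProduct_comm]

theorem skew_dot_self {d : ℕ} {Θ : Matrix (Fin d) (Fin d) ℝ} (hskew : Θᵀ = -Θ)
    (x : Fin d → ℝ) : x ⬝ᵥ (Θ *ᵥ x) = 0 := by
  have := skew_dot hskew x x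
  linarith

/-- If `(1 + cΘ)v = 0` then `0 = ⟨v, (1 + cΘ)v⟩ = |v|²`. -/
theorem det_one_add_smul_skew_ne_zero {d : ℕ} {Θ : Matrix (Fin d) (Fin d) ℝ}
    (hskew : Θᵀ = -Θ) (c : ℝ) : (1 + c • Θ).det ≠ 0 := by
  intro h0
  obtain ⟨v, hv, h⟩ := exists_mulVec_eq_zero_iff.2 h0
  apply hv
  have h1 : v ⬝ᵥ ((1 + c • Θ) *ᵥ v) = 0 := by rw [h, dotProduct_zero]
  rw [add_mulVec, one_mulVec, smul_mulVec, dotProduct_add, dotProduct_smul,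
    skew_dot_self hskew, smul_zero, add_zero] at h1
  exact dotProduct_self_eq_zero.1 h1

/-- The factorization `G⁻¹ = MᵀM` with `M = 1 + (Ω/2)Θ`. -/
theorem Gmat_eq {d : ℕ} {Θ : Matrix (Fin d) (Fin d) ℝ} (hskew : Θᵀ = -Θ) (Ω : ℝ) :
    Gmat Θ Ω = ((1 + (Ω / 2) • Θ)ᵀ * (1 + (Ω / 2) • Θ))⁻¹ := by
  unfold Gmat
  congr 1
  rw [transpose_add, transpose_smul, hskew, transpose_one, add_mul, mul_add, mul_add]
  simp only [one_mul, mul_one, Matrix.smul_mul, Matrix.mul_smul, neg_mul, smul_neg, smul_smul]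
  rw [show Ω ^ 2 / 4 = Ω / 2 * (Ω / 2) by ring]
  abel

theorem sqrt_det_Gmat {d : ℕ} {Θ : Matrix (Fin d) (Fin d) ℝ} (hskew : Θᵀ = -Θ) (Ω : ℝ) :
    Real.sqrt (Gmat Θ Ω).det = |(1 + (Ω / 2) • Θ).det|⁻¹ := by
  rw [Gmat_eq hskew, det_nonsing_inv, Ring.inverse_eq_inv', det_mul, det_transpose,
    Real.sqrt_inv, Real.sqrt_mul_self_eq_abs]

/-- In the coordinate `z = Mᵀp` the form `⟨z, Gz⟩` is `|p|²`. -/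
theorem dot_Gmat {d : ℕ} {Θ : Matrix (Fin d) (Fin d) ℝ} (hskew : Θᵀ = -Θ) (Ω : ℝ)
    (p : Fin d → ℝ) :
    ((1 + (Ω / 2) • Θ)ᵀ *ᵥ p) ⬝ᵥ (Gmat Θ Ω *ᵥ ((1 + (Ω / 2) • Θ)ᵀ *ᵥ p)) = p ⬝ᵥ p := by
  have hM := det_one_add_smul_skew_ne_zero hskew (Ω / 2)
  set M := 1 + (Ω / 2) • Θ
  have hMT : IsUnit Mᵀ.det := by rw [det_transpose]; exact hM.isUnit
  rw [Gmat_eq hskew, mulVec_mulVec, Matrix.mul_inv_rev, Matrix.mul_assoc, nonsing_inv_mul _ hMT,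
    Matrix.mul_one, mulVec_transpose, ← dotProduct_mulVec, mulVec_mulVec,
    mul_nonsing_inv _ hM.isUnit, one_mulVec]

/-! ### The phase-space kernel -/

/-- The Gaussian `E(x,k) = exp(−|k|²/(4s) − (c²/s)|x|² − (2ib/s)⟨k,x⟩)` left after the inner
integral over `y` in `f ⋆ K_t(·,x)`, up to a constant. Its exponent is written as a real part plus
`I` times an imaginary part. -/
def phaseKernel {d : ℕ} (b c s : ℝ) (x k : Fin d → ℝ) : ℂ :=
  Complex.exp (((-(k ⬝ᵥ k) / (4 * s) - c ^ 2 / s * (x ⬝ᵥ x) : ℝ) : ℂ) +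
    Complex.I * ((-(2 * b / s) * (k ⬝ᵥ x) : ℝ) : ℂ))

theorem norm_phaseKernel {d : ℕ} (b c s : ℝ) (x k : Fin d → ℝ) :
    ‖phaseKernel b c s x k‖ =
      Real.exp (-(c ^ 2 / s) * (x ⬝ᵥ x)) * Real.exp (-(1 / (4 * s)) * (k ⬝ᵥ k)) := by
  rw [phaseKernel, Complex.norm_exp, Complex.add_re, Complex.re_mul_ofReal, Complex.ofReal_re,
    Complex.I_re, zero_mul, add_zero, ← Real.exp_add]
  congr 1
  ring

theorem continuous_phaseKernel {d : ℕ} (b c s : ℝ) :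
    Continuous (fun q : (Fin d → ℝ) × (Fin d → ℝ) => phaseKernel b c s q.1 q.2) := by
  unfold phaseKernel dotProduct
  fun_prop

/-- The integral over `k` of the kernel sheared by `x = z − ½Θk`; it produces the factor `√(det G)`
and the effective Gaussian `exp(−4b⟨z, Gz⟩)`. -/
theorem integral_phaseKernel {d m : ℕ} (hd : d = m + m) {Θ : Matrix (Fin d) (Fin d) ℝ}
    (hskew : Θᵀ = -Θ) {b s Ω : ℝ} (hs : 0 < s) (hbs : b * s = b ^ 2 + (Ω / 2) ^ 2 / 4)
    (z : Fin d → ℝ) :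
    ∫ k, phaseKernel b (Ω / 2) s (z - (2 : ℝ)⁻¹ • (Θ *ᵥ k)) k =
      (((4 * π * s) ^ m * Real.sqrt (Gmat Θ Ω).det : ℝ) : ℂ) *
        ((Real.exp (-(4 * b) * (z ⬝ᵥ (Gmat Θ Ω *ᵥ z))) : ℝ) : ℂ) := by
  have hM := det_one_add_smul_skew_ne_zero hskew (Ω / 2)
  have hsq := sqrt_det_Gmat hskew Ω
  have hG := dot_Gmat hskew Ω
  set c := Ω / 2 with hc
  set M := 1 + c • Θ with hMdef
  have hMT : IsUnit Mᵀ.det := by rw [det_transpose]; exact hM.isUnit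
  -- In the coordinate `p` linear terms simplify: `⟨k, z⟩ = ⟨Mk, p⟩`.
  obtain ⟨p, rfl⟩ : ∃ p, z = Mᵀ *ᵥ p :=
    ⟨Mᵀ⁻¹ *ᵥ z, by rw [mulVec_mulVec, mul_nonsing_inv _ hMT, one_mulVec]⟩
  set z := Mᵀ *ᵥ p with hz
  have hMk : ∀ k, M *ᵥ k = k + c • (Θ *ᵥ k) := fun k => by
    rw [hMdef, add_mulVec, one_mulVec, smul_mulVec]
  have hzp : z = p - c • (Θ *ᵥ p) := by
    rw [hz, hMdef, transpose_add, transpose_smul, hskew, transpose_one, add_mulVec, one_mulVec,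
      smul_mulVec, neg_mulVec, smul_neg, sub_eq_add_neg]
  have hpp := skew_dot_self hskew p
  -- `g` is the scalar Gaussian in the variable `u = Mk`.
  let g : (Fin d → ℝ) → ℂ := fun u =>
    Complex.exp (((-(1 / (4 * s)) * (u ⬝ᵥ u) + ((c / s) • (z - p)) ⬝ᵥ u : ℝ) : ℂ) +
      Complex.I * (((-(2 * b / s) • p) ⬝ᵥ u : ℝ) : ℂ))
  have hg : Continuous g := by
    unfold g dotProduct
    fun_prop
  have key : ∀ k, phaseKernel b c s (z - (2 : ℝ)⁻¹ • (Θ *ᵥ k)) k =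
      Complex.exp (((-(c ^ 2 / s) * (z ⬝ᵥ z) : ℝ) : ℂ)) *
      g (M *ᵥ k) := by
    intro k
    have hkk := skew_dot_self hskew k
    have hkp := skew_dot hskew p k
    have h1 : k ⬝ᵥ z = p ⬝ᵥ (M *ᵥ k) := by
      rw [hz, dotProduct_comm, mulVec_transpose, ← dotProduct_mulVec]
    have h2 : (M *ᵥ k) ⬝ᵥ (M *ᵥ k) = k ⬝ᵥ k + c ^ 2 * ((Θ *ᵥ k) ⬝ᵥ (Θ *ᵥ k)) := by
      rw [hMk]
      simp only [dotProduct_add, add_dotProduct, smul_dotProduct, dotProduct_smul, smul_eq_mul,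
        dotProduct_comm (Θ *ᵥ k) k, hkk]
      ring
    have h3 : c * (z ⬝ᵥ (Θ *ᵥ k)) = (z - p) ⬝ᵥ (M *ᵥ k) := by
      rw [sub_dotProduct, ← h1, hMk, dotProduct_add, dotProduct_smul, dotProduct_comm k z]
      simp
    have h4 : k ⬝ᵥ (z - (2 : ℝ)⁻¹ • (Θ *ᵥ k)) = p ⬝ᵥ (M *ᵥ k) := by
      rw [dotProduct_sub, dotProduct_smul, hkk, smul_zero, sub_zero, h1]
    have h5 : (z - (2 : ℝ)⁻¹ • (Θ *ᵥ k)) ⬝ᵥ (z - (2 : ℝ)⁻¹ • (Θ *ᵥ k)) =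
        z ⬝ᵥ z - z ⬝ᵥ (Θ *ᵥ k) + ((Θ *ᵥ k) ⬝ᵥ (Θ *ᵥ k)) / 4 := by
      simp only [dotProduct_sub, sub_dotProduct, smul_dotProduct, dotProduct_smul, smul_eq_mul,
        dotProduct_comm (Θ *ᵥ k) z]
      ring
    simp only [phaseKernel, g]
    rw [← Complex.exp_add, ← add_assoc, ← Complex.ofReal_add, h4, h5, h2, smul_dotProduct,
      smul_dotProduct, ← h3, smul_eq_mul, smul_eq_mul]
    congr 3
    field_simp
    ring
  simp_rw [key]
  rw [integral_const_mul, integral_comp_mulVec M hM g hg, gaussian_dot hd (by positivity), hsq, hG]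
  have e1 : ((c / s) • (z - p)) ⬝ᵥ ((c / s) • (z - p)) =
      c ^ 2 / s ^ 2 * (z ⬝ᵥ z - p ⬝ᵥ p) := by
    have : z ⬝ᵥ p = p ⬝ᵥ p := by
      rw [hzp, dotProduct_comm, dotProduct_sub, dotProduct_smul, hpp]; simp
    simp only [dotProduct_sub, sub_dotProduct, smul_dotProduct, dotProduct_smul, smul_eq_mul,
      dotProduct_comm p z, this]
    ring
  -- The cross term vanishes since `z - p` is a multiple of `Θp`, which is orthogonal to `p`.
  have e2 : (-(2 * b / s) • p) ⬝ᵥ ((c / s) • (z - p)) = 0 := by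
    rw [hzp]
    simp [hpp]
  have e3 : (-(2 * b / s) • p) ⬝ᵥ (-(2 * b / s) • p) = 4 * b ^ 2 / s ^ 2 * (p ⬝ᵥ p) := by
    simp only [smul_dotProduct, dotProduct_smul, smul_eq_mul]
    ring
  rw [e1, e2, e3]
  simp only [zero_div, Complex.ofReal_zero, mul_zero, add_zero]
  rw [← Complex.ofReal_exp, ← Complex.ofReal_exp]
  norm_cast
  have e4 : Real.exp (-(4 * b) * (p ⬝ᵥ p)) = Real.exp (-(c ^ 2 / s) * (z ⬝ᵥ z)) *
      Real.exp ((c ^ 2 / s ^ 2 * (z ⬝ᵥ z - p ⬝ᵥ p) - 4 * b ^ 2 / s ^ 2 * (p ⬝ᵥ p)) /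
        (4 * (1 / (4 * s)))) := by
    rw [← Real.exp_add]
    congr 1
    field_simp
    linear_combination (-4 * (p ⬝ᵥ p)) * hbs
  rw [e4, show π / (1 / (4 * s)) = 4 * π * s by field_simp]
  ring

/-! ### The Moyal product with the Mehler kernel -/

/-- The Moyal product with the Mehler kernel on the diagonal, after the Fourier integral over `y`
has been evaluated. -/
theorem moyal_mehler_eq {d m : ℕ} (hd : d = m + m) (Θ : Matrix (Fin d) (Fin d) ℝ)
    {b s Ω t : ℝ} (hs : 0 < s) (hb : b = Ω / 4 * Real.tanh (Ω * t))
    (hsb : s = Ω / 4 * coth (Ω * t) + b) (hbs : b * s = b ^ 2 + (Ω / 2) ^ 2 / 4)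
    (f : (Fin d → ℝ) → ℂ) (x : Fin d → ℝ) :
    moyal Θ f (fun y => (mehler d Ω t y x : ℂ)) x =
      (((Ω / (2 * π * Real.sinh (2 * Ω * t))) ^ ((d : ℝ) / 2) *
        (((2 * π) ^ d)⁻¹ * (π / s) ^ m) : ℝ) : ℂ) *
        ∫ k, f (x + (2 : ℝ)⁻¹ • (Θ *ᵥ k)) * phaseKernel b (Ω / 2) s x k := by
  set C : ℝ := (Ω / (2 * π * Real.sinh (2 * Ω * t))) ^ ((d : ℝ) / 2) with hC
  have inner : ∀ k : Fin d → ℝ, ∫ y : Fin d → ℝ, f (x + (2 : ℝ)⁻¹ • Θ.mulVec k) *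
      (mehler d Ω t (x + y) x : ℂ) * Complex.exp (Complex.I * (dotR k y : ℂ)) =
      ((C * (π / s) ^ m : ℝ) : ℂ) *
        (f (x + (2 : ℝ)⁻¹ • (Θ *ᵥ k)) * phaseKernel b (Ω / 2) s x k) := by
    intro k
    have hpt : ∀ y : Fin d → ℝ, f (x + (2 : ℝ)⁻¹ • Θ.mulVec k) *
        (mehler d Ω t (x + y) x : ℂ) * Complex.exp (Complex.I * (dotR k y : ℂ)) =
        (f (x + (2 : ℝ)⁻¹ • (Θ *ᵥ k)) * (C : ℂ) *
          Complex.exp ((-(4 * b) * (x ⬝ᵥ x) : ℝ) : ℂ)) *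
        Complex.exp (((-s * (y ⬝ᵥ y) + (-(4 * b) • x) ⬝ᵥ y : ℝ) : ℂ) +
          Complex.I * ((k ⬝ᵥ y : ℝ) : ℂ)) := by
      intro y
      have h1 : ∑ i, ((x + y) i - x i) ^ 2 = y ⬝ᵥ y :=
        Finset.sum_congr rfl fun i _ => by simp [sq]
      have h2 : ∑ i, ((x + y) i + x i) ^ 2 = 4 * (x ⬝ᵥ x) + 4 * (x ⬝ᵥ y) + y ⬝ᵥ y := by
        simp only [dotProduct, Finset.mul_sum, ← Finset.sum_add_distrib, Pi.add_apply]
        exact Finset.sum_congr rfl fun i _ => by ring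
      have h3 : mehler d Ω t (x + y) x = C * (Real.exp (-(4 * b) * (x ⬝ᵥ x)) *
          Real.exp (-s * (y ⬝ᵥ y) + (-(4 * b) • x) ⬝ᵥ y)) := by
        rw [mehler, h1, h2, ← Real.exp_add, smul_dotProduct, smul_eq_mul, hsb, hb]
        congr 2
        ring
      rw [h3, Complex.exp_add]
      push_cast
      simp only [dotR, dotProduct]
      push_cast
      ring
    simp_rw [hpt]
    rw [integral_const_mul, gaussian_dot hd hs, phaseKernel]
    -- Completing the square in `y` turns the weight `4b` of `|x|²` into `4b − 4b²/s = c²/s`.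
    have h4 : Complex.exp ((-(4 * b) * (x ⬝ᵥ x) : ℝ) : ℂ) *
        Complex.exp ((((-(4 * b) • x) ⬝ᵥ (-(4 * b) • x) - k ⬝ᵥ k) / (4 * s) : ℝ) +
          Complex.I * ((k ⬝ᵥ (-(4 * b) • x) / (2 * s) : ℝ) : ℂ)) =
        Complex.exp (((-(k ⬝ᵥ k) / (4 * s) - (Ω / 2) ^ 2 / s * (x ⬝ᵥ x) : ℝ) : ℂ) +
          Complex.I * ((-(2 * b / s) * (k ⬝ᵥ x) : ℝ) : ℂ)) := by
      rw [← Complex.exp_add, ← add_assoc, ← Complex.ofReal_add]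
      congr 1
      congr 1
      · congr 1
        simp only [smul_dotProduct, dotProduct_smul, smul_eq_mul]
        field_simp
        linear_combination (-64 * (x ⬝ᵥ x)) * hbs
      · congr 2
        simp only [dotProduct_smul, smul_eq_mul]
        field_simp
        ring
    rw [← h4]
    push_cast
    ring
  unfold moyal
  simp_rw [inner]
  rw [integral_const_mul, Complex.real_smul]
  push_cast
  ring

/-- Joint integrability before the translation: `f` is bounded and the kernel is Gaussian in both
variables. -/
theorem integrable_translated {d : ℕ} (Θ : Matrix (Fin d) (Fin d) ℝ) {b c s : ℝ} (hs : 0 < s)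
    (hc : 0 < c) (f : SchwartzMap (Fin d → ℝ) ℂ) :
    Integrable (fun q : (Fin d → ℝ) × (Fin d → ℝ) =>
      f (q.1 + (2 : ℝ)⁻¹ • (Θ *ᵥ q.2)) * phaseKernel b c s q.1 q.2) (volume.prod volume) := by
  have hL : Continuous (fun q : (Fin d → ℝ) × (Fin d → ℝ) => (2 : ℝ)⁻¹ • (Θ *ᵥ q.2)) := by
    fun_prop
  have hgauss := ((integrable_gaussian_dot (d := d) (s := c ^ 2 / s) (by positivity)).mul_prod
    (integrable_gaussian_dot (d := d) (s := 1 / (4 * s)) (by positivity))).const_mul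
    (SchwartzMap.seminorm ℝ 0 0 f)
  refine hgauss.mono' ?_ (Filter.Eventually.of_forall fun q => ?_)
  · refine (Continuous.mul ?_ (continuous_phaseKernel b c s)).aestronglyMeasurable
    exact f.continuous.comp (continuous_fst.add hL)
  · rw [norm_mul, norm_phaseKernel]
    exact mul_le_mul_of_nonneg_right (SchwartzMap.norm_le_seminorm ℝ f _) (by positivity)

/-- Joint integrability after the translation: the sheared kernel is only bounded by a Gaussian in
`k`, and integrability of `f` controls `z`. -/
theorem integrable_sheared {d : ℕ} (Θ : Matrix (Fin d) (Fin d) ℝ) {b c s : ℝ} (hs : 0 < s)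
    (f : SchwartzMap (Fin d → ℝ) ℂ) :
    Integrable (fun q : (Fin d → ℝ) × (Fin d → ℝ) =>
      f q.1 * phaseKernel b c s (q.1 - (2 : ℝ)⁻¹ • (Θ *ᵥ q.2)) q.2) (volume.prod volume) := by
  have hL : Continuous (fun q : (Fin d → ℝ) × (Fin d → ℝ) => (2 : ℝ)⁻¹ • (Θ *ᵥ q.2)) := by
    fun_prop
  have hf : Integrable (fun z => ‖f z‖) := (f.integrable (μ := volume)).norm
  have hgauss := hf.mul_prod (integrable_gaussian_dot (d := d) (s := 1 / (4 * s)) (by positivity))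
  refine hgauss.mono' ?_ (Filter.Eventually.of_forall fun q => ?_)
  · refine (Continuous.mul (f.continuous.comp continuous_fst) ?_).aestronglyMeasurable
    exact (continuous_phaseKernel b c s).comp
      ((continuous_fst.sub hL).prodMk continuous_snd)
  · rw [norm_mul, norm_phaseKernel]
    refine mul_le_mul_of_nonneg_left ?_ (norm_nonneg _)
    refine mul_le_of_le_one_left (Real.exp_nonneg _) (Real.exp_le_one_iff.2 ?_)
    have hnn : ∀ v : Fin d → ℝ, 0 ≤ v ⬝ᵥ v := fun v =>
      Finset.sum_nonneg fun i _ => mul_self_nonneg _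
    have := mul_nonneg (show 0 ≤ c ^ 2 / s by positivity)
      (hnn (q.1 - (2 : ℝ)⁻¹ • (Θ *ᵥ q.2)))
    linarith

/-- Trace of left Moyal multiplication composed with the Mehler heat
kernel: `∫ (f ⋆ K_t(·,x))(x) dx
  = (Ω̃/(2π sinh 2Ω̃t))^{d/2} √(det G) ∫ f(z) exp(−Ω̃ tanh(Ω̃t)⟨z,Gz⟩) dz`,
the outer integral on the left converging absolutely. -/
theorem moyal_mehler_trace {d : ℕ} (hd : Even d) (hd2 : 2 ≤ d)
    (Θ : Matrix (Fin d) (Fin d) ℝ) (hskew : Θᵀ = -Θ) (hdet : Θ.det ≠ 0)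
    (Ω : ℝ) (hΩ : 0 < Ω) (t : ℝ) (ht : 0 < t)
    (f : SchwartzMap ((Fin d) → ℝ) ℂ) :
    Integrable (fun x : Fin d → ℝ =>
      moyal Θ ⇑f (fun y => (mehler d Ω t y x : ℂ)) x) ∧
    (∫ x : Fin d → ℝ, moyal Θ ⇑f (fun y => (mehler d Ω t y x : ℂ)) x)
      = (((Ω / (2 * π * Real.sinh (2 * Ω * t))) ^ ((d : ℝ) / 2) *
          Real.sqrt (Gmat Θ Ω).det : ℝ) : ℂ) *
        ∫ z : Fin d → ℝ, f z *
          (Real.exp (-(Ω * Real.tanh (Ω * t)) * dotR z ((Gmat Θ Ω).mulVec z)) : ℂ) := by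
  obtain ⟨m, hm⟩ := hd
  have hΩt : 0 < Ω * t := mul_pos hΩ ht
  have hsinh : 0 < Real.sinh (Ω * t) := Real.sinh_pos_iff.2 hΩt
  have hcosh : 0 < Real.cosh (Ω * t) := Real.cosh_pos _
  obtain ⟨b, hb⟩ : ∃ b, b = Ω / 4 * Real.tanh (Ω * t) := ⟨_, rfl⟩
  obtain ⟨s, hsb⟩ : ∃ s, s = Ω / 4 * coth (Ω * t) + b := ⟨_, rfl⟩
  have hs : 0 < s := by
    rw [hsb, hb, coth, Real.tanh_eq_sinh_div_cosh]
    positivity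
  have hbs : b * s = b ^ 2 + (Ω / 2) ^ 2 / 4 := by
    rw [hsb, hb, coth, Real.tanh_eq_sinh_div_cosh]
    field_simp
    ring
  have hmoyal := fun x => moyal_mehler_eq hm Θ hs hb hsb hbs f x
  have hint := integrable_translated (b := b) Θ hs (half_pos hΩ) f
  simp_rw [hmoyal]
  refine ⟨hint.integral_prod_left.const_mul _, ?_⟩
  -- Exchange `x` and `k`, translate `x = z - ½Θk` for fixed `k`, and exchange back.
  have hswap : ∫ x, ∫ k, f (x + (2 : ℝ)⁻¹ • (Θ *ᵥ k)) * phaseKernel b (Ω / 2) s x k =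
      ∫ z, f z * ∫ k, phaseKernel b (Ω / 2) s (z - (2 : ℝ)⁻¹ • (Θ *ᵥ k)) k := by
    rw [integral_integral_swap hint]
    simp_rw [← integral_const_mul]
    have hswap' := integral_integral_swap
      (f := fun z k => f z * phaseKernel b (Ω / 2) s (z - (2 : ℝ)⁻¹ • (Θ *ᵥ k)) k)
      (integrable_sheared Θ hs f)
    rw [hswap']
    refine integral_congr_ae (Filter.Eventually.of_forall fun k => ?_)
    have h := integral_add_right_eq_self (μ := (volume : Measure (Fin d → ℝ)))
      (fun z => f z * phaseKernel b (Ω / 2) s (z - (2 : ℝ)⁻¹ • (Θ *ᵥ k)) k)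
      ((2 : ℝ)⁻¹ • (Θ *ᵥ k))
    simpa only [add_sub_cancel_right] using h
  rw [integral_const_mul, hswap]
  simp_rw [integral_phaseKernel hm hskew hs hbs, mul_left_comm (f _)]
  rw [integral_const_mul, ← mul_assoc]
  have hconst : ((2 * π) ^ d)⁻¹ * (π / s) ^ m * (4 * π * s) ^ m = 1 := by
    rw [hm, ← two_mul, pow_mul, ← inv_pow, ← mul_pow, ← mul_pow]
    convert one_pow m
    field_simp
    norm_num
  have h4b : 4 * b = Ω * Real.tanh (Ω * t) := by rw [hb]; ring
  rw [h4b, ← Complex.ofReal_mul]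
  congr 2
  linear_combination ((Ω / (2 * π * Real.sinh (2 * Ω * t))) ^ ((d : ℝ) / 2) *
    Real.sqrt (Gmat Θ Ω).det) * hconst

end
end
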